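/- Let d ≥ 2 and let H be the joint distribution function of a probability measure μ on ℝ^d with marginal distribution functions F₁,…,F_d. Then there exists a d-copula C such that H(x₁,…,x_d) = C(F₁(x₁),…,F_d(x_d)) for all (x₁,…,x_d) ∈ ℝ^d. Conversely, if C is a d-copula and F₁,…,F_d are distribution functions of probability measures on ℝ, then there exists a probability measure on ℝ^d whose joint distribution function is H(x₁,…,x_d) = C(F₁(x₁),…,F_d(x_d)) and whose marginal distribution functions are F₁,…,F_d. -/

import Mathlib

/-!
A copula is the joint distribution function of a law on the cube `[0, 1]^d` with uniform margins,
and quantile functions transport such laws to laws on `ℝ^d` with arbitrary margins: the quantile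
function `q` of `ρ` maps the uniform law to `ρ`, and almost surely `q u ≤ x ↔ u ≤ cdf ρ x`, so the
joint distribution function of the image is the copula composed with the marginal ones.

Conversely, every law on `ℝ^d` is such an image. Disintegrating the joint law of `(q U, U)`, with
`U` uniform, over its first component gives a function `f` with `q (f (x, w)) = x` almost surely
and `f (x, w)` uniform, where `x` has law `ρ` and `w` is uniform and independent of `x`; these
randomized sections of the marginal quantile functions lift the given law to the cube.

To see that a copula `C` comes from a law on the cube, put on a finite grid the `C`-volume of each
cell at its upper corner. The total mass below a grid point telescopes to the value of `C` there:
`C` extends to a multilinear map taking pure tensors `⨂ i, e (x i)` to `C x`, and the `C`-volume of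
a box is its value at `⨂ i, (e (b i) - e (a i))`. By compactness of the space of laws on the cube
the grid laws have a limit along an ultrafilter refining all grids. Its margins are uniform, hence
the boundaries of lower orthants are null sets for it, and its joint distribution function is `C`.
-/

open MeasureTheory ENNReal Set

/-- A `d`-copula: grounded, `d`-increasing, with uniform margins. The `d`-increasing
condition is stated as nonnegativity of the alternating sum over the vertices of the
box `∏ i {a i, b i}`, the vertex with `v i = b i` exactly for `i ∈ s` carrying the
sign `(-1)^{#{i : v i = a i}} = (-1)^{d - #s}`. -/
def IsCopula (d : ℕ) (C : (Fin d → ℝ) → ℝ) : Prop :=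
  (∀ u : Fin d → ℝ, (∀ i, u i ∈ Icc (0:ℝ) 1) → (∃ i, u i = 0) → C u = 0) ∧
  (∀ a b : Fin d → ℝ, (∀ i, a i ∈ Icc (0:ℝ) 1) → (∀ i, b i ∈ Icc (0:ℝ) 1) →
    (∀ i, a i ≤ b i) →
    0 ≤ ∑ s : Finset (Fin d),
          (-1 : ℝ) ^ (d - s.card) * C (fun i => if i ∈ s then b i else a i)) ∧
  (∀ i : Fin d, ∀ t ∈ Icc (0:ℝ) 1, C (fun j => if j = i then t else 1) = t)

open ProbabilityTheory Filter Topology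
open scoped unitInterval

theorem exists_multilinearMap_apply_single {ι α M : Type*} [Finite ι] [DecidableEq α]
    [AddCommGroup M] (C : (ι → α) → M) :
    ∃ f : MultilinearMap ℤ (fun _ : ι ↦ Π₀ _ : α, ℤ) M,
      ∀ x, f (fun i ↦ DFinsupp.single (x i) 1) = C x := by
  classical
  have := Fintype.ofFinite ι
  exact ⟨MultilinearMap.fromDFinsuppEquiv (fun _ ↦ α) ℤ fun x ↦ MultilinearMap.mkPiRing ℤ ι (C x),
    fun x ↦ by simp [MultilinearMap.fromDFinsuppEquiv_single]⟩

section BoxVolume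

variable {ι α M : Type*} [Fintype ι] [DecidableEq ι] [AddCommGroup M]

/-- The `C`-volume of the box `∏ i, [a i, b i]`: the alternating sum of the values of `C` at the
vertices. -/
def boxVolume (C : (ι → α) → M) (a b : ι → α) : M :=
  ∑ s : Finset ι, (-1 : ℤ) ^ sᶜ.card • C (s.piecewise b a)

theorem boxVolume_eq_sum_ite {d : ℕ} (C : (Fin d → α) → ℝ) (a b : Fin d → α) :
    boxVolume C a b = ∑ s : Finset (Fin d),
      (-1 : ℝ) ^ (d - s.card) * C (fun i ↦ if i ∈ s then b i else a i) := by
  simp only [boxVolume, Finset.card_compl, Fintype.card_fin, zsmul_eq_mul, Int.cast_pow,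
    Int.cast_neg, Int.cast_one]
  rfl

theorem boxVolume_multilinearMap {E : ι → Type*} [∀ i, AddCommGroup (E i)]
    (f : MultilinearMap ℤ E M) (e : ∀ i, α → E i) (a b : ι → α) :
    boxVolume (fun x ↦ f fun i ↦ e i (x i)) a b = f fun i ↦ e i (b i) - e i (a i) := by
  set u := fun i ↦ e i (b i)
  set v := fun i ↦ e i (a i)
  have flip_signs (s : Finset ι) : s.piecewise u (-v) =
      sᶜ.piecewise (fun i ↦ (-1 : ℤ) • s.piecewise u v i) (s.piecewise u v) := by
    ext i
    by_cases hi : i ∈ s <;> simp [hi]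
  have piecewise_comp (s : Finset ι) : (fun i ↦ e i (s.piecewise b a i)) = s.piecewise u v := by
    ext i
    by_cases hi : i ∈ s <;> simp [hi, u, v]
  change _ = f (u - v)
  simp_rw [sub_eq_add_neg, f.map_add_univ, flip_signs, f.map_piecewise_smul, Finset.prod_const,
    boxVolume, piecewise_comp]

theorem boxVolume_bot [LinearOrder α] [OrderBot α] {C : (ι → α) → M}
    (hC : ∀ x i, x i = ⊥ → C x = 0) (x : ι → α) : boxVolume C ⊥ x = C x := by
  rw [boxVolume, Finset.sum_eq_single Finset.univ _ (by simp)]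
  · simp
  · intro s _ hs
    obtain ⟨i, hi⟩ : ∃ i, i ∉ s := by simpa [Finset.eq_univ_iff_forall] using hs
    rw [hC _ i (by simp [hi]), smul_zero]

end BoxVolume

section Grid

variable {ι α M : Type*} [AddCommGroup M] [LinearOrder α] [OrderBot α]

/-- The predecessor of `t` in the finite grid `S ∪ {⊥}`. -/
def gridPred (S : Finset α) (t : α) : α := {s ∈ S | s < t}.sup id

theorem gridPred_le (S : Finset α) (t : α) : gridPred S t ≤ t :=
  Finset.sup_le fun _ hs ↦ (Finset.mem_filter.1 hs).2.le

theorem sum_sub_gridPred (f : α → M) (S : Finset α) :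
    ∑ t ∈ S, (f t - f (gridPred S t)) = f (S.sup id) - f ⊥ := by
  induction S using Finset.induction_on_max with
  | empty => simp
  | insert a S ha ih =>
    have haS : a ∉ S := fun h ↦ (ha a h).false
    have pred_old : ∀ t ∈ S, gridPred (insert a S) t = gridPred S t := fun t ht ↦ by
      rw [gridPred, gridPred, Finset.filter_insert, if_neg (ha t ht).not_gt]
    have pred_new : gridPred (insert a S) a = S.sup id := by
      rw [gridPred, Finset.filter_insert, if_neg (lt_irrefl a), Finset.filter_true_of_mem ha]
    have sup_le : S.sup id ≤ a := Finset.sup_le fun t ht ↦ (ha t ht).le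
    rw [Finset.sum_insert haS, Finset.sum_congr rfl fun t ht ↦ by rw [pred_old t ht], ih, pred_new,
      Finset.sup_insert, id, sup_eq_left.2 sup_le, sub_add_sub_cancel]

variable [Fintype ι] [DecidableEq ι]

theorem sum_boxVolume_gridPred (C : (ι → α) → M) (S : ι → Finset α) :
    ∑ k ∈ Fintype.piFinset S, boxVolume C (fun i ↦ gridPred (S i) (k i)) k =
      boxVolume C ⊥ fun i ↦ (S i).sup id := by
  obtain ⟨f, hf⟩ := exists_multilinearMap_apply_single C
  let e (_ : ι) (t : α) : Π₀ _ : α, ℤ := DFinsupp.single t 1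
  have boxVolume_eq (a b : ι → α) : boxVolume C a b = f fun i ↦ e i (b i) - e i (a i) := by
    rw [← boxVolume_multilinearMap]
    exact congrArg (boxVolume · a b) (funext fun x ↦ (hf x).symm)
  simp_rw [boxVolume_eq, Pi.bot_apply, ← sum_sub_gridPred (e _), f.map_sum_finset]

theorem gridPred_filter_le (S : Finset α) {t x : α} (h : t ≤ x) :
    gridPred {s ∈ S | s ≤ x} t = gridPred S t := by
  rw [gridPred, gridPred, Finset.filter_filter]
  congr! 3 with s
  exact and_iff_right_of_imp fun hs ↦ hs.le.trans h

theorem sum_boxVolume_gridPred_le {C : (ι → α) → M} (hC : ∀ x i, x i = ⊥ → C x = 0)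
    {S : Finset α} {x : ι → α} (hx : ∀ i, x i ∈ S) :
    ∑ k ∈ Fintype.piFinset (fun _ : ι ↦ S) with ∀ i, k i ≤ x i,
      boxVolume C (gridPred S ∘ k) k = C x := by
  have sup_eq (i : ι) : ({s ∈ S | s ≤ x i} : Finset α).sup id = x i :=
    le_antisymm (Finset.sup_le fun _ hs ↦ (Finset.mem_filter.1 hs).2)
      (Finset.le_sup (f := id) (by simpa using hx i))
  calc
    _ = ∑ k ∈ Fintype.piFinset fun i ↦ {s ∈ S | s ≤ x i},
        boxVolume C (fun i ↦ gridPred {s ∈ S | s ≤ x i} (k i)) k := by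
      refine Finset.sum_congr ?_ fun k hk ↦ ?_
      · ext k
        simp [forall_and]
      · congr 1
        ext i
        exact (gridPred_filter_le S (by simp_all)).symm
    _ = C x := by simp only [sum_boxVolume_gridPred, sup_eq, boxVolume_bot hC]

theorem exists_measure_Iic_eq_of_boxVolume_nonneg [MeasurableSpace α] [MeasurableSingletonClass α]
    {C : (ι → α) → ℝ} (hbot : ∀ x i, x i = ⊥ → C x = 0)
    (hbox : ∀ a b, a ≤ b → 0 ≤ boxVolume C a b) (S : Finset α) :
    ∃ ν : Measure (ι → α), ∀ x, (∀ i, x i ∈ S) → ν (Iic x) = ENNReal.ofReal (C x) := by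
  classical
  let w (k : ι → α) : ℝ := boxVolume C (gridPred S ∘ k) k
  have w_nonneg (k : ι → α) : 0 ≤ w k := hbox _ _ fun i ↦ gridPred_le S (k i)
  refine ⟨∑ k ∈ Fintype.piFinset fun _ ↦ S, ENNReal.ofReal (w k) • Measure.dirac k, fun x hx ↦ ?_⟩
  rw [← sum_boxVolume_gridPred_le hbot hx, ENNReal.ofReal_sum_of_nonneg fun k _ ↦ w_nonneg k,
    Finset.sum_filter]
  simp [Measure.finsetSum_apply, indicator_apply, Pi.le_def, w]

end Grid

section BoxMeasure

variable {ι α : Type*} [Fintype ι] [DecidableEq ι]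

theorem boxVolume_prod {R : Type*} [CommRing R] (f : ι → α → R) (a b : ι → α) :
    boxVolume (fun x ↦ ∏ i, f i (x i)) a b = ∏ i, (f i (b i) - f i (a i)) :=
  boxVolume_multilinearMap (MultilinearMap.mkPiAlgebra ℤ ι R) f a b

theorem boxVolume_integral {Ω : Type*} [MeasurableSpace Ω] {ν : Measure Ω}
    {g : (ι → α) → Ω → ℝ} (hg : ∀ x, Integrable (g x) ν) (a b : ι → α) :
    boxVolume (fun x ↦ ∫ ω, g x ω ∂ν) a b = ∫ ω, boxVolume (g · ω) a b ∂ν := by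
  simp only [boxVolume, zsmul_eq_mul]
  rw [integral_finsetSum _ fun s _ ↦ (hg _).const_mul _]
  simp only [integral_const_mul]

theorem boxVolume_measureReal_Iic [LinearOrder α] [TopologicalSpace α] [OrderClosedTopology α]
    [MeasurableSpace α] [OpensMeasurableSpace α] (ν : Measure (ι → α)) [IsFiniteMeasure ν]
    {a b : ι → α} (hab : a ≤ b) :
    boxVolume (fun x ↦ ν.real (Iic x)) a b = ν.real (univ.pi fun i ↦ Ioc (a i) (b i)) := by
  let χ (s : Set α) : α → ℝ := s.indicator 1
  have indicator_pi (s : ι → Set α) :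
      (univ.pi s).indicator (1 : (ι → α) → ℝ) = fun y ↦ ∏ i, χ (s i) (y i) := by
    ext y
    simpa using indicator_pi_one_apply (M₀ := ℝ) Finset.univ s y
  have χ_Ioc (y : ι → α) (i : ι) :
      χ (Ioc (a i) (b i)) (y i) = χ (Iic (b i)) (y i) - χ (Iic (a i)) (y i) := by
    rw [← Iic_sdiff_Iic]
    exact congrFun (indicator_sdiff (Iic_subset_Iic.2 (hab i)) 1) (y i)
  have integrable_Iic (x : ι → α) : Integrable (fun y ↦ ∏ i, χ (Iic (x i)) (y i)) ν := by
    rw [← indicator_pi]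
    exact (integrable_const 1).indicator (.univ_pi fun _ ↦ measurableSet_Iic)
  calc boxVolume (fun x ↦ ν.real (Iic x)) a b
    _ = boxVolume (fun x ↦ ∫ y, ∏ i, χ (Iic (x i)) (y i) ∂ν) a b := by
      congr! 2 with x
      rw [← indicator_pi, pi_univ_Iic, integral_indicator_one]
      exact pi_univ_Iic x ▸ .univ_pi fun _ ↦ measurableSet_Iic
    _ = ∫ y, ∏ i, χ (Ioc (a i) (b i)) (y i) ∂ν := by
      simp only [boxVolume_integral integrable_Iic, χ_Ioc,
        fun y : ι → α ↦ boxVolume_prod fun i t ↦ χ (Iic t) (y i)]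
    _ = ν.real (univ.pi fun i ↦ Ioc (a i) (b i)) := by
      rw [← indicator_pi, integral_indicator_one (.univ_pi fun _ ↦ measurableSet_Ioc)]

end BoxMeasure

section WeakLimit

theorem measure_frontier_Iic_eq_zero {ι α : Type*} [Finite ι] [LinearOrder α] [TopologicalSpace α]
    [OrderClosedTopology α] [MeasurableSpace α] [MeasurableSingletonClass α]
    {ν : Measure (ι → α)} {τ : ι → Measure α} [∀ i, NullSingletonClass (τ i)]
    (hν : ∀ i, MeasurePreserving (Function.eval i) ν (τ i)) (x : ι → α) :
    ν (frontier (Iic x)) = 0 := by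
  have frontier_subset : frontier (Iic x) ⊆ ⋃ i, Function.eval i ⁻¹' {x i} := by
    rw [isClosed_Iic.frontier_eq]
    rintro y ⟨hyx, hy⟩
    by_contra! h
    have y_mem : y ∈ univ.pi fun i ↦ Iio (x i) := fun i _ ↦
      (hyx i).lt_of_ne fun hi ↦ h (mem_iUnion_of_mem i hi)
    refine hy (interior_maximal ?_ (isOpen_set_pi finite_univ fun _ _ ↦ isOpen_Iio) y_mem)
    exact fun z hz i ↦ (hz i trivial).le
  refine measure_mono_null frontier_subset (measure_iUnion_null fun i ↦ ?_)
  rw [(hν i).measure_preimage (measurableSet_singleton _).nullMeasurableSet, measure_singleton]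

theorem eq_volume_of_tendsto_Iic {γ : Type*} {l : Filter γ} [l.NeBot]
    {m : γ → ProbabilityMeasure I} {ρ : ProbabilityMeasure I} (hm : Tendsto m l (𝓝 ρ))
    (h : ∀ t, Tendsto (fun n ↦ (m n : Measure I) (Iic t)) l (𝓝 (volume (Iic t)))) :
    (ρ : Measure I) = volume := by
  refine Measure.ext_of_Iic _ _ fun t ↦ le_antisymm ?_ ?_
  · refine le_of_forall_gt_imp_ge_of_dense fun a ha ↦ ?_
    rw [unitInterval.volume_Iic] at ha
    obtain h1 | h1 := le_total 1 a
    · exact prob_le_one.trans h1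
    lift a to NNReal using ne_top_of_le_ne_top one_ne_top h1
    let r : I := ⟨a, a.2, by simpa using h1⟩
    have t_lt_r : t < r := by
      rwa [← Subtype.coe_lt_coe, ← ENNReal.ofReal_lt_coe_iff t.2.1]
    calc (ρ : Measure I) (Iic t)
      _ ≤ (ρ : Measure I) (Iio r) := measure_mono (Iic_subset_Iio.2 t_lt_r)
      _ ≤ l.liminf fun n ↦ (m n : Measure I) (Iio r) :=
        ProbabilityMeasure.le_liminf_measure_open_of_tendsto hm isOpen_Iio
      _ ≤ l.liminf fun n ↦ (m n : Measure I) (Iic r) :=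
        liminf_le_liminf (.of_forall fun n ↦ measure_mono Iio_subset_Iic_self)
      _ = volume (Iic r) := (h r).liminf_eq
      _ = a := by simp [r]
  · rw [← (h t).limsup_eq]
    exact ProbabilityMeasure.limsup_measure_closed_le_of_tendsto hm isClosed_Iic

end WeakLimit

section Copula

variable {ι : Type*}

/-- The copula of a law `ν` on the cube, i.e. its joint distribution function, as a function on
`ι → ℝ`. -/
noncomputable def copulaOfMeasure (ν : Measure (ι → I)) (u : ι → ℝ) : ℝ :=
  ν.real {y | ∀ i, (y i : ℝ) ≤ u i}

theorem copulaOfMeasure_coe (ν : Measure (ι → I)) (u : ι → I) :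
    copulaOfMeasure ν (fun i ↦ u i) = ν.real (Iic u) := rfl

theorem copulaOfMeasure_eq_measureReal_map [Countable ι] (ν : Measure (ι → I)) :
    copulaOfMeasure ν = fun u ↦ (ν.map fun y i ↦ (y i : ℝ)).real (Iic u) := by
  ext u
  rw [map_measureReal_apply (by fun_prop) measurableSet_Iic]
  rfl

theorem Iic_update_top [DecidableEq ι] (i : ι) (t : I) :
    Iic (Function.update (⊤ : ι → I) i t) = Function.eval i ⁻¹' Iic t := by
  ext y
  simp [le_update_iff]

theorem coe_update_top [DecidableEq ι] (i : ι) (t : I) :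
    (fun j ↦ (Function.update (⊤ : ι → I) i t j : ℝ)) = fun j ↦ if j = i then (t : ℝ) else 1 := by
  ext j
  by_cases hj : j = i
  · subst hj
    simp
  · simp [hj]

variable {d : ℕ}

theorem isCopula_copulaOfMeasure {ν : Measure (Fin d → I)} [IsFiniteMeasure ν]
    (hν : ∀ i, MeasurePreserving (Function.eval i) ν volume) : IsCopula d (copulaOfMeasure ν) := by
  refine ⟨fun u _ ⟨i, hi⟩ ↦ ?_, fun a b _ _ hab ↦ ?_, fun i t ht ↦ ?_⟩
  · have : {y : Fin d → I | ∀ j, (y j : ℝ) ≤ u j} ⊆ Function.eval i ⁻¹' Iic 0 := fun y hy ↦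
      (hy i).trans hi.le
    refine measureReal_mono_null this ?_
    rw [measureReal_def, (hν i).measure_preimage measurableSet_Iic.nullMeasurableSet]
    simp
  · rw [← boxVolume_eq_sum_ite, copulaOfMeasure_eq_measureReal_map, boxVolume_measureReal_Iic _ hab]
    exact measureReal_nonneg
  · lift t to I using ht
    rw [← coe_update_top, copulaOfMeasure_coe, Iic_update_top, measureReal_def,
      (hν i).measure_preimage measurableSet_Iic.nullMeasurableSet]
    simp [t.2.1]

namespace IsCopula

variable {C : (Fin d → ℝ) → ℝ}

theorem apply_coe_eq_zero (hC : IsCopula d C) (x : Fin d → I) (i : Fin d) (hi : x i = ⊥) :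
    C (fun j ↦ x j) = 0 :=
  hC.1 _ (fun j ↦ (x j).2) ⟨i, congrArg Subtype.val hi⟩

theorem boxVolume_coe_nonneg (hC : IsCopula d C) (a b : Fin d → I) (hab : a ≤ b) :
    0 ≤ boxVolume (fun x : Fin d → I ↦ C fun i ↦ x i) a b := by
  simpa only [boxVolume_eq_sum_ite, apply_ite] using
    hC.2.1 _ _ (fun i ↦ (a i).2) (fun i ↦ (b i).2) hab

theorem apply_coe_update_top (hC : IsCopula d C) (i : Fin d) (t : I) :
    C (fun j ↦ (Function.update (⊤ : Fin d → I) i t j : ℝ)) = t := by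
  rw [coe_update_top, hC.2.2 i t t.2]

theorem apply_coe_top (hC : IsCopula d C) (hd : 0 < d) :
    C (fun j ↦ ((⊤ : Fin d → I) j : ℝ)) = 1 := by
  rw [← Function.update_eq_self ⟨0, hd⟩ (⊤ : Fin d → I)]
  exact hC.apply_coe_update_top _ _

theorem apply_coe_nonneg (hC : IsCopula d C) (x : Fin d → I) : 0 ≤ C fun i ↦ x i := by
  rw [← boxVolume_bot hC.apply_coe_eq_zero x]
  exact hC.boxVolume_coe_nonneg _ _ bot_le

theorem exists_probabilityMeasure_Iic_eq_on_grid (hC : IsCopula d C) (hd : 0 < d) (S : Finset I) :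
    ∃ ν : ProbabilityMeasure (Fin d → I), ∀ x : Fin d → I, (∀ i, x i ∈ S) →
      (ν : Measure (Fin d → I)) (Iic x) = ENNReal.ofReal (C fun i ↦ x i) := by
  obtain ⟨ν, hν⟩ := exists_measure_Iic_eq_of_boxVolume_nonneg hC.apply_coe_eq_zero
    hC.boxVolume_coe_nonneg (insert ⊤ S)
  have ν_univ : ν univ = 1 := by
    rw [← Iic_top, hν ⊤ (by simp), hC.apply_coe_top hd, ofReal_one]
  exact ⟨⟨ν, ⟨ν_univ⟩⟩, fun x hx ↦ hν x fun i ↦ Finset.mem_insert_of_mem (hx i)⟩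

theorem exists_copulaOfMeasure_eq (hC : IsCopula d C) (hd : 0 < d) :
    ∃ ν : Measure (Fin d → I), IsProbabilityMeasure ν ∧
      (∀ i, MeasurePreserving (Function.eval i) ν volume) ∧
      ∀ u : Fin d → I, copulaOfMeasure ν (fun i ↦ u i) = C fun i ↦ u i := by
  choose ν hν using hC.exists_probabilityMeasure_Iic_eq_on_grid hd
  let U : Ultrafilter (Finset I) := .of atTop
  obtain ⟨ρ, -, hρ⟩ := isCompact_univ.ultrafilter_le_nhds (U.map ν) (by simp)
  have tendsto_Iic (x : Fin d → I) : Tendsto (fun S ↦ (ν S : Measure (Fin d → I)) (Iic x)) U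
      (𝓝 (ENNReal.ofReal (C fun i ↦ x i))) := by
    refine tendsto_nhds_of_eventually_eq (.filter_mono (Ultrafilter.of_le _) ?_)
    filter_upwards [eventually_ge_atTop (Finset.univ.image x)] with S hS
    exact hν S x fun i ↦ hS (Finset.mem_image_of_mem x (Finset.mem_univ i))
  have uniform (i : Fin d) :
      MeasurePreserving (Function.eval i) (ρ : Measure (Fin d → I)) volume := by
    have h_eval : Measurable (Function.eval i : (Fin d → I) → I) := measurable_pi_apply i
    have tendsto_map := ProbabilityMeasure.tendsto_map_of_tendsto_of_continuous _ _ hρ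
      (continuous_apply i)
    refine ⟨h_eval, eq_volume_of_tendsto_Iic tendsto_map fun t ↦ ?_⟩
    simpa [Measure.map_apply h_eval measurableSet_Iic, ← Iic_update_top,
      hC.apply_coe_update_top] using tendsto_Iic (Function.update ⊤ i t)
  refine ⟨ρ, inferInstance, uniform, fun u ↦ ?_⟩
  have measure_Iic := tendsto_nhds_unique
    (ProbabilityMeasure.tendsto_measure_of_null_frontier_of_tendsto' hρ
      (measure_frontier_Iic_eq_zero uniform u)) (tendsto_Iic u)
  rw [copulaOfMeasure_coe, measureReal_def, measure_Iic, toReal_ofReal (hC.apply_coe_nonneg u)]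

end IsCopula

end Copula

section Quantile

/-- The quantile function of `ρ`, i.e. the generalized inverse of its distribution function. At
`u = 0`, and at `u = 1` if the support of `ρ` is unbounded above, the value is junk. -/
noncomputable def quantile (ρ : Measure ℝ) (u : I) : ℝ := sInf {x | (u : ℝ) ≤ cdf ρ x}

variable {ρ : Measure ℝ}

theorem quantile_le_iff {u : I} (hu : u ∈ Ioo 0 1) {x : ℝ} :
    quantile ρ u ≤ x ↔ (u : ℝ) ≤ cdf ρ x := by
  obtain ⟨b, hb⟩ := ((tendsto_cdf_atTop ρ).eventually_const_lt (show (u : ℝ) < 1 from hu.2)).exists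
  obtain ⟨a, ha⟩ := ((tendsto_cdf_atBot ρ).eventually_lt_const (show (0 : ℝ) < u from hu.1)).exists
  have bddBelow : BddBelow {x | (u : ℝ) ≤ cdf ρ x} :=
    ⟨a, fun x hx ↦ le_of_not_ge fun hxa ↦ (hx.trans (monotone_cdf ρ hxa)).not_gt ha⟩
  refine ⟨fun h ↦ ?_, fun h ↦ csInf_le bddBelow h⟩
  refine ge_of_tendsto ((cdf ρ).right_continuous x |>.mono Ioi_subset_Ici_self) ?_
  filter_upwards [self_mem_nhdsWithin] with y hxy
  obtain ⟨z, hz, hzy⟩ := exists_lt_of_csInf_lt ⟨b, hb.le⟩ (h.trans_lt hxy)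
  exact hz.trans (monotone_cdf ρ hzy.le)

theorem compl_Ioo_zero_one : (Ioo (0 : I) 1)ᶜ = {0, 1} := by
  ext u
  simp [unitInterval.pos_iff_ne_zero, unitInterval.lt_one_iff_ne_one, or_iff_not_imp_left]

theorem ae_mem_Ioo_zero_one : ∀ᵐ u : I, u ∈ Ioo (0 : I) 1 := by
  change volume (Ioo (0 : I) 1)ᶜ = 0
  rw [compl_Ioo_zero_one]
  exact (toFinite _).measure_zero _

theorem measurable_quantile : Measurable (quantile ρ) := by
  refine measurable_of_Iic fun x ↦ ?_
  rw [← inter_union_compl (quantile ρ ⁻¹' Iic x) (Ioo 0 1)]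
  refine .union ?_ (Finite.measurableSet ?_)
  · have : quantile ρ ⁻¹' Iic x ∩ Ioo 0 1 = {u : I | (u : ℝ) ≤ cdf ρ x} ∩ Ioo 0 1 :=
      ext fun u ↦ and_congr_left fun hu ↦ quantile_le_iff hu
    rw [this]
    exact (measurableSet_le measurable_subtype_coe measurable_const).inter measurableSet_Ioo
  · rw [compl_Ioo_zero_one]
    exact (toFinite _).inter_of_right _

theorem measurePreserving_quantile [IsProbabilityMeasure ρ] :
    MeasurePreserving (quantile ρ) volume ρ := by
  refine ⟨measurable_quantile, Measure.ext_of_Iic _ _ fun x ↦ ?_⟩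
  let p : I := ⟨cdf ρ x, cdf_nonneg ρ x, cdf_le_one ρ x⟩
  have preimage_ae_eq : quantile ρ ⁻¹' Iic x =ᵐ[volume] Iic p := by
    filter_upwards [ae_mem_Ioo_zero_one] with u hu
    exact propext (quantile_le_iff hu)
  rw [Measure.map_apply measurable_quantile measurableSet_Iic, measure_congr preimage_ae_eq,
    unitInterval.volume_Iic, ofReal_cdf]

end Quantile

section Coupling

variable {X Y : Type*} [MeasurableSpace X] [MeasurableSpace Y] [StandardBorelSpace Y]

theorem exists_map_prodMk_unitInterval_eq [Nonempty Y] (γ : Measure (X × Y)) [IsFiniteMeasure γ] :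
    ∃ f : X × I → Y, Measurable f ∧ (γ.fst.prod volume).map (fun p ↦ (p.1, f p)) = γ := by
  obtain ⟨f, hf, hfγ⟩ := γ.condKernel.exists_measurable_map_eq_unitInterval
  refine ⟨Function.uncurry f, hf, ?_⟩
  conv_rhs => rw [← γ.disintegrate γ.condKernel]
  ext s hs
  rw [Measure.map_apply (by fun_prop) hs, Measure.prod_apply (by measurability),
    Measure.compProd_apply hs]
  refine lintegral_congr fun x ↦ ?_
  rw [← hfγ, Measure.map_apply (by fun_prop) (measurable_prodMk_left hs)]
  rfl

theorem exists_randomized_section [MeasurableEq X] {η : Measure Y} [IsProbabilityMeasure η]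
    {ρ : Measure X} {q : Y → X} (hq : MeasurePreserving q η ρ) :
    ∃ f : X × I → Y, MeasurePreserving f (ρ.prod volume) η ∧
      ∀ᵐ p ∂ρ.prod volume, q (f p) = p.1 := by
  have : Nonempty Y := nonempty_of_isProbabilityMeasure η
  obtain ⟨f, hf, hf_map⟩ := exists_map_prodMk_unitInterval_eq (η.map fun y ↦ (q y, y))
  rw [Measure.fst_map_prodMk measurable_id', hq.map_eq] at hf_map
  refine ⟨f, ⟨hf, ?_⟩, ?_⟩
  · have := congrArg Measure.snd hf_map
    rwa [Measure.snd_map_prodMk measurable_fst, Measure.snd_map_prodMk hq.measurable,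
      Measure.map_id'] at this
  · have h_meas : MeasurableSet {z : X × Y | q z.2 = z.1} :=
      measurableSet_eq_fun (hq.measurable.comp measurable_snd) measurable_fst
    have ae_graph : ∀ᵐ z ∂η.map fun y ↦ (q y, y), q z.2 = z.1 :=
      (ae_map_iff (hq.measurable.prodMk measurable_id').aemeasurable h_meas).2
        (.of_forall fun _ ↦ rfl)
    rwa [← hf_map, ae_map_iff (measurable_fst.prodMk hf).aemeasurable h_meas] at ae_graph

end Coupling

section Lift

variable {ι : Type*} [Countable ι] {X Y : ι → Type*} [∀ i, MeasurableSpace (X i)]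
  [∀ i, MeasurableEq (X i)] [∀ i, MeasurableSpace (Y i)] [∀ i, StandardBorelSpace (Y i)]

theorem exists_measurePreserving_pi_map {η : ∀ i, Measure (Y i)} [∀ i, IsProbabilityMeasure (η i)]
    {ρ : ∀ i, Measure (X i)} {q : ∀ i, Y i → X i} (hq : ∀ i, MeasurePreserving (q i) (η i) (ρ i))
    {μ : Measure (∀ i, X i)} [IsProbabilityMeasure μ]
    (hμ : ∀ i, MeasurePreserving (Function.eval i) μ (ρ i)) :
    ∃ ν : Measure (∀ i, Y i), IsProbabilityMeasure ν ∧
      (∀ i, MeasurePreserving (Function.eval i) ν (η i)) ∧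
      MeasurePreserving (Pi.map q) ν μ := by
  choose f hf hqf using fun i ↦ exists_randomized_section (hq i)
  have hg (i : ι) : MeasurePreserving (Prod.map (Function.eval i) id) (μ.prod volume)
      ((ρ i).prod (volume : Measure I)) := by
    have : IsProbabilityMeasure (ρ i) := by
      rw [← (hμ i).map_eq]
      exact Measure.isProbabilityMeasure_map (hμ i).aemeasurable
    exact (hμ i).prod (.id _)
  let F (p : (∀ i, X i) × I) (i : ι) : Y i := f i (p.1 i, p.2)
  have measurable_F : Measurable F := measurable_pi_lambda _ fun i ↦ ((hf i).comp (hg i)).measurable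
  have map_F : ∀ᵐ p ∂μ.prod volume, Pi.map q (F p) = p.1 := by
    filter_upwards [ae_all_iff.2 fun i ↦ (hg i).quasiMeasurePreserving.ae (hqf i)] with p hp
    exact funext hp
  have measurable_q : Measurable (Pi.map q) :=
    measurable_pi_lambda _ fun i ↦ (hq i).measurable.comp (measurable_pi_apply i)
  refine ⟨(μ.prod volume).map F, Measure.isProbabilityMeasure_map measurable_F.aemeasurable,
    fun i ↦ ⟨measurable_pi_apply i, ?_⟩, measurable_q, ?_⟩
  · rw [Measure.map_map (measurable_pi_apply i) measurable_F]
    exact ((hf i).comp (hg i)).map_eq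
  · rw [Measure.map_map measurable_q measurable_F]
    exact (Measure.map_congr map_F).trans measurePreserving_fst.map_eq

end Lift

section JointQuantile

variable {ι : Type*}

theorem measurable_piMap_quantile (ρ : ι → Measure ℝ) :
    Measurable (Pi.map fun i ↦ quantile (ρ i)) :=
  measurable_pi_lambda _ fun i ↦ measurable_quantile.comp (measurable_pi_apply i)

theorem measureReal_map_quantile_Iic [Countable ι] {ν : Measure (ι → I)}
    (hν : ∀ i, MeasurePreserving (Function.eval i) ν volume) (ρ : ι → Measure ℝ) (x : ι → ℝ) :
    (ν.map (Pi.map fun i ↦ quantile (ρ i))).real (Iic x) =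
      copulaOfMeasure ν fun i ↦ cdf (ρ i) (x i) := by
  rw [map_measureReal_apply (measurable_piMap_quantile ρ) measurableSet_Iic]
  refine measureReal_congr ?_
  filter_upwards [ae_all_iff.2 fun i ↦ (hν i).quasiMeasurePreserving.ae ae_mem_Ioo_zero_one]
    with u hu
  exact propext (forall_congr' fun i ↦ quantile_le_iff (hu i))

theorem measurePreserving_eval_map_quantile {ν : Measure (ι → I)}
    (hν : ∀ i, MeasurePreserving (Function.eval i) ν volume) (ρ : ι → Measure ℝ)
    [∀ i, IsProbabilityMeasure (ρ i)] (i : ι) :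
    MeasurePreserving (Function.eval i) (ν.map (Pi.map fun i ↦ quantile (ρ i))) (ρ i) where
  measurable := measurable_pi_apply i
  map_eq := by
    rw [Measure.map_map (measurable_pi_apply i) (measurable_piMap_quantile ρ)]
    exact (measurePreserving_quantile.comp (hν i)).map_eq

theorem cdf_map_eval (μ : Measure (ι → ℝ)) [IsProbabilityMeasure μ] (i : ι) (t : ℝ) :
    cdf (μ.map (Function.eval i)) t = (μ {y | y i ≤ t}).toReal := by
  have h_eval : Measurable (Function.eval i : (ι → ℝ) → ℝ) := measurable_pi_apply i
  have := Measure.isProbabilityMeasure_map (μ := μ) h_eval.aemeasurable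
  rw [cdf_eq_real, map_measureReal_apply h_eval measurableSet_Iic]
  rfl

end JointQuantile

/-- Sklar's theorem: every joint distribution function of a probability
measure on `ℝ^d` factors through a `d`-copula applied to its marginal distribution
functions, and conversely every `d`-copula composed with one-dimensional distribution
functions is the joint distribution function of a probability measure on `ℝ^d` with the
prescribed margins. -/
theorem sklar (d : ℕ) (hd : 2 ≤ d) :
    (∀ μ : MeasureTheory.Measure (Fin d → ℝ), IsProbabilityMeasure μ →
      ∃ C : (Fin d → ℝ) → ℝ, IsCopula d C ∧
        ∀ x : Fin d → ℝ,
          (μ {y | ∀ i, y i ≤ x i}).toReal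
            = C (fun i => (μ {y | y i ≤ x i}).toReal)) ∧
    (∀ C : (Fin d → ℝ) → ℝ, IsCopula d C →
      ∀ μs : Fin d → MeasureTheory.Measure ℝ, (∀ i, IsProbabilityMeasure (μs i)) →
        ∃ μ : MeasureTheory.Measure (Fin d → ℝ), IsProbabilityMeasure μ ∧
          (∀ x : Fin d → ℝ,
            (μ {y | ∀ i, y i ≤ x i}).toReal
              = C (fun i => (μs i (Iic (x i))).toReal)) ∧
          (∀ i : Fin d, ∀ t : ℝ, (μ {y | y i ≤ t}).toReal = (μs i (Iic t)).toReal)) := by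
  refine ⟨fun μ _ ↦ ?_, fun C hC ρ _ ↦ ?_⟩
  · have h_eval (i : Fin d) : Measurable (Function.eval i : (Fin d → ℝ) → ℝ) :=
      measurable_pi_apply i
    have (i : Fin d) : IsProbabilityMeasure (μ.map (Function.eval i)) :=
      Measure.isProbabilityMeasure_map (h_eval i).aemeasurable
    obtain ⟨ν, _, uniform, hνμ⟩ := exists_measurePreserving_pi_map
      (q := fun i ↦ quantile (μ.map (Function.eval i))) (fun _ ↦ measurePreserving_quantile)
      (fun i ↦ (h_eval i).measurePreserving μ)
    refine ⟨copulaOfMeasure ν, isCopula_copulaOfMeasure uniform, fun x ↦ ?_⟩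
    have H_eq := measureReal_map_quantile_Iic uniform (fun i ↦ μ.map (Function.eval i)) x
    simp only [hνμ.map_eq, cdf_map_eval] at H_eq
    exact H_eq
  · obtain ⟨ν, _, uniform, hνC⟩ := hC.exists_copulaOfMeasure_eq (two_pos.trans_le hd)
    let μ := ν.map (Pi.map fun i ↦ quantile (ρ i))
    have : IsProbabilityMeasure μ :=
      Measure.isProbabilityMeasure_map (measurable_piMap_quantile ρ).aemeasurable
    refine ⟨μ, this, fun x ↦ ?_, fun i t ↦ ?_⟩
    · refine (measureReal_map_quantile_Iic uniform ρ x).trans ?_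
      simpa [cdf_eq_real, measureReal_def] using
        hνC fun i ↦ ⟨cdf (ρ i) (x i), cdf_nonneg _ _, cdf_le_one _ _⟩
    · have margin := measurePreserving_eval_map_quantile uniform ρ i
      exact congrArg ENNReal.toReal (margin.measure_preimage measurableSet_Iic.nullMeasurableSet)
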